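/- arXiv:1602.04159 — 2 statements merged into one kernel-verified Lean document; each statement's English description precedes it below -/
import Mathlib

section
/- Let r ≥ 2 and let Cl_r denote the Clifford algebra over ℝ of the negative-definite quadratic form Q(v) = -‖v‖² on Euclidean space ℝ^r, with canonical linear embedding ι : ℝ^r → Cl_r and standard orthonormal basis e_1, …, e_r. Let A be an element of the ℝ-linear span of the set {ι(e_i) * ι(e_j) : 1 ≤ i < j ≤ r}. Then A² = -1 (where 1 is the unit of Cl_r) if and only if there exist vectors v₁, v₂ ∈ ℝ^r with ‖v₁‖ = ‖v₂‖ = 1 and ⟨v₁, v₂⟩ = 0 such that A = ι(v₁) * ι(v₂). -/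
open scoped RealInnerProductSpace

/-!
A bivector `A` is the Clifford product of an antisymmetric tensor `t`, and `⁅A, ι v⁆` is the vector
`ι w`, where `w` is twice the contraction of `t` with `v` along the polar form. When that form is
separating, its contractions determine `t`, so a bivector commuting with all vectors is zero.

Let `A` be a nonzero bivector with scalar square, and choose `v` with `ι w = ⁅A, ι v⁆ ≠ 0`. Since
`A ^ 2` is central, `A` anticommutes with `ι w`. Hence `2 • (A * ι w) = ⁅A, ι w⁆` is a vector `ι u`
with `u` orthogonal to `w`, and multiplying by `ι w` on the right gives
`A = (2 * Q w)⁻¹ • (ι u * ι w)`.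
-/

open CliffordAlgebra QuadraticMap
open scoped TensorProduct

section Contraction

variable {R M N P : Type*} [CommRing R] [AddCommGroup M] [Module R M] [Module.Free R M]
  [AddCommGroup N] [Module R N] [AddCommGroup P] [Module R P]

theorem tensor_eq_zero_of_forall_lTensor_flip_eq_zero {B : N →ₗ[R] P →ₗ[R] R}
    (hB : B.SeparatingLeft) {t : M ⊗[R] N} (ht : ∀ p, (B.flip p).lTensor M t = 0) : t = 0 := by
  classical
  let b := Module.Free.chooseBasis R M
  have coord_lTensor (i) (f : N →ₗ[R] R) (s : M ⊗[R] N) :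
      TensorProduct.equivFinsuppOfBasisLeft b (f.lTensor M s) i =
        f (TensorProduct.equivFinsuppOfBasisLeft b s i) := by
    induction s <;> simp_all
  refine (TensorProduct.equivFinsuppOfBasisLeft b).map_eq_zero_iff.mp (Finsupp.ext fun i ↦ ?_)
  refine hB _ fun p ↦ ?_
  rw [← LinearMap.flip_apply, ← coord_lTensor, ht p, map_zero, Finsupp.zero_apply]

end Contraction

section CommRing

variable {R M : Type*} [CommRing R] [AddCommGroup M] [Module R M] (Q : QuadraticForm R M)

/-- The bivectors of a Clifford algebra, i.e. the image of `Λ² M`, which is `spin(r)` for the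
negative-definite form on `ℝ^r`. They are encoded as the span of the commutators of two vectors, a
form independent of any basis. -/
def bivectors : Submodule R (CliffordAlgebra Q) :=
  Submodule.span R {x | ∃ a b : M, x = ⁅ι Q a, ι Q b⁆}

/-- The Clifford product of two vectors as a linear map on tensors, `a ⊗ b ↦ ι a * ι b`, by which
bivectors are lifted to antisymmetric tensors. -/
def cliffordMul : M ⊗[R] M →ₗ[R] CliffordAlgebra Q :=
  LinearMap.mul' R (CliffordAlgebra Q) ∘ₗ TensorProduct.map (ι Q) (ι Q)

/-- The contraction of the right tensor factor with `v` along the polar form,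
`a ⊗ b ↦ polar Q b v • a`, through which the Clifford product of a tensor acts on `v` by
commutators. -/
def polarContract (v : M) : M ⊗[R] M →ₗ[R] M :=
  TensorProduct.rid R M ∘ₗ (Q.polarBilin.flip v).lTensor M

@[simp]
theorem cliffordMul_tmul (a b : M) : cliffordMul Q (a ⊗ₜ b) = ι Q a * ι Q b := by
  simp [cliffordMul]

@[simp]
theorem polarContract_tmul (v a b : M) : polarContract Q v (a ⊗ₜ b) = polar Q b v • a := by
  simp [polarContract]

theorem lie_ι_mul_ι (a b v : M) :
    ⁅ι Q a * ι Q b, ι Q v⁆ = ι Q (polar Q b v • a - polar Q a v • b) := by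
  calc ⁅ι Q a * ι Q b, ι Q v⁆
      = ι Q a * (ι Q b * ι Q v + ι Q v * ι Q b)
          - (ι Q a * ι Q v + ι Q v * ι Q a) * ι Q b := by
        rw [Ring.lie_def]; noncomm_ring
    _ = ι Q (polar Q b v • a - polar Q a v • b) := by
        simp only [ι_mul_ι_add_swap, ← Algebra.commutes, ← Algebra.smul_def, map_sub, map_smul]

theorem lie_cliffordMul_ι (t : M ⊗[R] M) (v : M) :
    ⁅cliffordMul Q t, ι Q v⁆ = ι Q (polarContract Q v (t - TensorProduct.comm R M M t)) := by
  induction t with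
  | zero => simp [Ring.lie_def]
  | tmul a b => simp [lie_ι_mul_ι]
  | add s t hs ht =>
    calc ⁅cliffordMul Q (s + t), ι Q v⁆
        = ⁅cliffordMul Q s, ι Q v⁆ + ⁅cliffordMul Q t, ι Q v⁆ := by
          simp only [Ring.lie_def, map_add, add_mul, mul_add]; abel
      _ = _ := by rw [hs, ht, ← map_add, ← map_add, map_add (TensorProduct.comm R M M),
          add_sub_add_comm]

variable {Q}

theorem exists_comm_eq_neg_and_cliffordMul_eq_of_mem_bivectors {A : CliffordAlgebra Q}
    (hA : A ∈ bivectors Q) : ∃ t, TensorProduct.comm R M M t = -t ∧ cliffordMul Q t = A := by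
  suffices h : bivectors Q ≤ Submodule.map (cliffordMul Q)
      (LinearMap.ker ((TensorProduct.comm R M M).toLinearMap + LinearMap.id)) by
    obtain ⟨t, ht, rfl⟩ := h hA
    exact ⟨t, eq_neg_of_add_eq_zero_left ht, rfl⟩
  refine Submodule.span_le.mpr ?_
  rintro _ ⟨a, b, rfl⟩
  exact ⟨a ⊗ₜ b - b ⊗ₜ a, by simp, by simp [Ring.lie_def]⟩

theorem exists_lie_ι_eq_ι_of_mem_bivectors {A : CliffordAlgebra Q} (hA : A ∈ bivectors Q) (v : M) :
    ∃ w, ⁅A, ι Q v⁆ = ι Q w := by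
  obtain ⟨t, -, rfl⟩ := exists_comm_eq_neg_and_cliffordMul_eq_of_mem_bivectors hA
  exact ⟨_, lie_cliffordMul_ι Q t v⟩

theorem sq_ι_mul_ι_of_isOrtho {x y : M} (h : Q.IsOrtho x y) :
    (ι Q x * ι Q y) ^ 2 = algebraMap R _ (-(Q x * Q y)) := by
  calc (ι Q x * ι Q y) ^ 2 = -(ι Q x * ι Q x * (ι Q y * ι Q y)) := by
        rw [pow_two, mul_ι_mul_ι_mul_comm_of_isOrtho _ h.symm]
    _ = algebraMap R _ (-(Q x * Q y)) := by
        rw [ι_sq_scalar, ι_sq_scalar, map_neg, map_mul]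

variable [Invertible (2 : R)]

theorem cliffordAlgebra_ι_injective : Function.Injective (ι Q) := fun x y h ↦ by
  simpa [equivExterior] using congrArg (equivExterior Q) h

theorem separatingLeft_polarBilin_of_anisotropic (hQ : Q.Anisotropic) :
    Q.polarBilin.SeparatingLeft := fun x hx ↦
  hQ x <| (isUnit_of_invertible (2 : R)).smul_eq_zero.mp <| by simpa using hx x

theorem eq_zero_of_mem_bivectors_of_forall_commute [Module.Free R M]
    (hQ : Q.polarBilin.SeparatingLeft) {A : CliffordAlgebra Q} (hA : A ∈ bivectors Q)
    (hcomm : ∀ v, Commute A (ι Q v)) : A = 0 := by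
  obtain ⟨t, hantisymm, rfl⟩ := exists_comm_eq_neg_and_cliffordMul_eq_of_mem_bivectors hA
  have hcontract (v) : polarContract Q v (t - TensorProduct.comm R M M t) = 0 := by
    apply cliffordAlgebra_ι_injective (Q := Q)
    rw [← lie_cliffordMul_ι, commute_iff_lie_eq.mp (hcomm v), map_zero]
  have htwo : (2 : R) • t = 0 := by
    rw [two_smul, ← sub_neg_eq_add, ← hantisymm]
    exact tensor_eq_zero_of_forall_lTensor_flip_eq_zero hQ fun v ↦
      (TensorProduct.rid R M).map_eq_zero_iff.mp (hcontract v)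
  rw [(isUnit_of_invertible (2 : R)).smul_eq_zero.mp htwo, map_zero]

theorem ι_mul_ι_mem_bivectors_of_isOrtho {a b : M} (h : Q.IsOrtho a b) :
    ι Q a * ι Q b ∈ bivectors Q := by
  have hlie : ⁅ι Q a, ι Q b⁆ = (2 : R) • (ι Q a * ι Q b) := by
    rw [Ring.lie_def, ι_mul_ι_comm_of_isOrtho h.symm, sub_neg_eq_add, two_smul]
  rw [← invOf_smul_smul (2 : R) (ι Q a * ι Q b), ← hlie]
  exact Submodule.smul_mem _ _ (Submodule.subset_span ⟨a, b, rfl⟩)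

theorem span_ι_mul_ι_le_bivectors_of_pairwise_isOrtho {n : Type*} [Preorder n] {e : n → M}
    (he : Pairwise fun i j ↦ Q.IsOrtho (e i) (e j)) :
    Submodule.span R {x | ∃ i j, i < j ∧ x = ι Q (e i) * ι Q (e j)} ≤ bivectors Q := by
  refine Submodule.span_le.mpr ?_
  rintro _ ⟨i, j, hij, rfl⟩
  exact ι_mul_ι_mem_bivectors_of_isOrtho (he hij.ne)

end CommRing

theorem mul_lie_eq_neg_lie_mul_of_commute_sq {S : Type*} [Ring S] {a x : S}
    (h : Commute (a ^ 2) x) : a * ⁅a, x⁆ = -(⁅a, x⁆ * a) := by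
  rw [eq_neg_iff_add_eq_zero, ← sub_eq_zero.mpr h.eq, Ring.lie_def]
  noncomm_ring

section Field

variable {K V : Type*} [Field K] [Invertible (2 : K)] [AddCommGroup V] [Module K V]
  {Q : QuadraticForm K V} {A : CliffordAlgebra Q}

theorem exists_isOrtho_eq_ι_mul_ι_of_anticommute (hA : A ∈ bivectors Q) {w : V} (hw : Q w ≠ 0)
    (hanti : A * ι Q w = -(ι Q w * A)) : ∃ u, Q.IsOrtho u w ∧ A = ι Q u * ι Q w := by
  obtain ⟨u, hu⟩ := exists_lie_ι_eq_ι_of_mem_bivectors hA w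
  have hu_right : ι Q u = (2 : K) • (A * ι Q w) := by
    rw [← hu, Ring.lie_def, two_smul, sub_eq_add_neg, ← hanti]
  have hu_mul : ι Q u * ι Q w = (2 * Q w) • A := by
    rw [hu_right, smul_mul_assoc, mul_assoc, ι_sq_scalar, ← Algebra.commutes, ← Algebra.smul_def,
      smul_smul]
  have mul_hu : ι Q w * ι Q u = -((2 * Q w) • A) := by
    rw [hu_right, mul_smul_comm, hanti, mul_neg, ← mul_assoc, ι_sq_scalar, ← Algebra.smul_def,
      smul_neg, smul_smul]
  have horth : Q.IsOrtho u w := by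
    rw [← isOrtho_polarBilin, polarBilin_apply_apply]
    apply (algebraMap K (CliffordAlgebra Q)).injective
    rw [← ι_mul_ι_add_swap, hu_mul, mul_hu, add_neg_cancel, map_zero]
  refine ⟨(2 * Q w)⁻¹ • u, ?_, ?_⟩
  · rw [← isOrtho_polarBilin, map_smul, LinearMap.smul_apply, isOrtho_polarBilin.mpr horth,
      smul_zero]
  · rw [map_smul, smul_mul_assoc, hu_mul, inv_smul_smul₀ (mul_ne_zero (Invertible.ne_zero 2) hw)]

theorem exists_isOrtho_eq_ι_mul_ι_of_forall_commute_sq (hQ : Q.Anisotropic) (hA : A ∈ bivectors Q)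
    (hcomm : ∀ v, Commute (A ^ 2) (ι Q v)) : ∃ x y, Q.IsOrtho x y ∧ A = ι Q x * ι Q y := by
  obtain rfl | hA0 := eq_or_ne A 0
  · exact ⟨0, 0, IsOrtho.zero_left 0, by simp⟩
  obtain ⟨v, hv⟩ : ∃ v, ¬Commute A (ι Q v) := by
    contrapose! hA0
    exact eq_zero_of_mem_bivectors_of_forall_commute
      (separatingLeft_polarBilin_of_anisotropic hQ) hA hA0
  obtain ⟨w, hw⟩ := exists_lie_ι_eq_ι_of_mem_bivectors hA v
  have hQw : Q w ≠ 0 := by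
    intro h
    rw [commute_iff_lie_eq, hw, hQ w h, map_zero] at hv
    exact hv rfl
  have hanti : A * ι Q w = -(ι Q w * A) := hw ▸ mul_lie_eq_neg_lie_mul_of_commute_sq (hcomm v)
  obtain ⟨u, huw, hAu⟩ := exists_isOrtho_eq_ι_mul_ι_of_anticommute hA hQw hanti
  exact ⟨u, w, huw, hAu⟩

theorem sq_eq_algebraMap_iff_of_mem_bivectors (hQ : Q.Anisotropic) (hA : A ∈ bivectors Q) {c : K} :
    A ^ 2 = algebraMap K _ c ↔
      ∃ x y, Q.IsOrtho x y ∧ -(Q x * Q y) = c ∧ A = ι Q x * ι Q y := by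
  constructor
  · intro hsq
    obtain ⟨x, y, hxy, rfl⟩ := exists_isOrtho_eq_ι_mul_ι_of_forall_commute_sq hQ hA fun v ↦
      hsq ▸ Algebra.commutes c (ι Q v)
    rw [sq_ι_mul_ι_of_isOrtho hxy] at hsq
    exact ⟨x, y, hxy, (algebraMap K _).injective hsq, rfl⟩
  · rintro ⟨x, y, hxy, rfl, rfl⟩
    exact sq_ι_mul_ι_of_isOrtho hxy

end Field

section InnerProductSpace

variable {E : Type*} [NormedAddCommGroup E] [InnerProductSpace ℝ E] {Q : QuadraticForm ℝ E}

theorem anisotropic_of_eq_neg_norm_sq (hQ : ∀ v, Q v = -‖v‖ ^ 2) : Q.Anisotropic := fun v hv ↦ by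
  simpa [hQ] using hv

theorem isOrtho_iff_inner_eq_zero_of_eq_neg_norm_sq (hQ : ∀ v, Q v = -‖v‖ ^ 2) {x y : E} :
    Q.IsOrtho x y ↔ ⟪x, y⟫ = 0 := by
  rw [isOrtho_def, hQ, hQ, hQ, norm_add_sq_real]
  constructor <;> intro h <;> linarith

theorem stmt0_general (hQ : ∀ v, Q v = -‖v‖ ^ 2) {A : CliffordAlgebra Q} (hA : A ∈ bivectors Q) :
    A ^ 2 = -1 ↔ ∃ v₁ v₂ : E,
      ‖v₁‖ = 1 ∧ ‖v₂‖ = 1 ∧ ⟪v₁, v₂⟫ = 0 ∧ A = ι Q v₁ * ι Q v₂ := by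
  rw [← map_one (algebraMap ℝ (CliffordAlgebra Q)), ← map_neg,
    sq_eq_algebraMap_iff_of_mem_bivectors (anisotropic_of_eq_neg_norm_sq hQ) hA]
  simp only [isOrtho_iff_inner_eq_zero_of_eq_neg_norm_sq hQ, hQ]
  constructor
  · rintro ⟨x, y, hxy, hprod, rfl⟩
    have hnorm : ‖y‖ * ‖x‖ = 1 :=
      (pow_eq_one_iff_of_nonneg (by positivity) two_ne_zero).mp (by linarith)
    have hy : ‖y‖ ≠ 0 := left_ne_zero_of_mul_eq_one hnorm
    refine ⟨‖y‖ • x, ‖y‖⁻¹ • y, ?_, ?_, ?_, ?_⟩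
    · rw [norm_smul, norm_norm, hnorm]
    · rw [norm_smul, norm_inv, norm_norm, inv_mul_cancel₀ hy]
    · rw [real_inner_smul_left, real_inner_smul_right, hxy, mul_zero, mul_zero]
    · rw [map_smul, map_smul, smul_mul_smul_comm, mul_inv_cancel₀ hy, one_smul]
  · rintro ⟨x, y, hx, hy, hxy, rfl⟩
    exact ⟨x, y, hxy, by simp [hx, hy], rfl⟩

end InnerProductSpace

theorem stmt0
    (r : ℕ) (hr : 2 ≤ r)
    (Q : QuadraticForm ℝ (EuclideanSpace ℝ (Fin r)))
    (hQ : ∀ v : EuclideanSpace ℝ (Fin r), Q v = -‖v‖ ^ 2)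
    (e : Fin r → EuclideanSpace ℝ (Fin r))
    (he : ∀ i, e i = EuclideanSpace.single i (1 : ℝ))
    (A : CliffordAlgebra Q)
    (hA : A ∈ Submodule.span ℝ
      {x : CliffordAlgebra Q | ∃ i j : Fin r, i < j ∧
        x = CliffordAlgebra.ι Q (e i) * CliffordAlgebra.ι Q (e j)}) :
    A ^ 2 = -1 ↔
      ∃ v₁ v₂ : EuclideanSpace ℝ (Fin r),
        ‖v₁‖ = 1 ∧ ‖v₂‖ = 1 ∧ ⟪v₁, v₂⟫ = 0 ∧
          A = CliffordAlgebra.ι Q v₁ * CliffordAlgebra.ι Q v₂ := by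
  refine stmt0_general hQ (span_ι_mul_ι_le_bivectors_of_pairwise_isOrtho (fun i j hij ↦ ?_) hA)
  simp [isOrtho_iff_inner_eq_zero_of_eq_neg_norm_sq hQ, he,
    EuclideanSpace.inner_single_left, hij]
end

section
/- Let V be a finite-dimensional real inner product space, r ≥ 3, and let Cl⁰_r denote the even subalgebra of the Clifford algebra over ℝ of the negative-definite quadratic form Q(v) = -‖v‖² on ℝ^r, with canonical embedding ι and standard orthonormal basis e_1, …, e_r. Let φ : Cl⁰_r → End(V) be a unital ℝ-algebra homomorphism such that J_{ij} := φ(ι(e_i) * ι(e_j)) is a skew-adjoint endomorphism of V for all i ≠ j. Let κ ∈ ℝ and let R : V × V → End(V) be an ℝ-bilinear map satisfying, for all X, Y ∈ V, the identity [R(X,Y), J_{12}] = κ Σ_{s=3}^r ( ⟨J_{s1}X, Y⟩ J_{s2} − ⟨J_{s2}X, Y⟩ J_{s1} ), where [·,·] is the commutator of endomorphisms. Then, with S = J_{12}, for all X, Y ∈ V: [R(SX, SY), S] − S ∘ [R(SX, Y), S] − S ∘ [R(X, SY), S] − [R(X, Y), S] = 0. -/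
/-!
Put `S = J i j`, so that `S * S = -1`. The Clifford relations give `J s j = S * J s i` and
`J s i * S = -(S * J s i)`, so with `A = J s i` each summand of the curvature identity has the form
`F X Y = B (A X) Y • (S * A) - B ((S * A) X) Y • A`. Such an `F` is complex linear in its first
argument, `F (S X) Y = S * F X Y`, hence its component which is `S`-antilinear in both arguments
vanishes; up to the factor `-4`, that component is the expression in the conclusion.
-/

open scoped RealInnerProductSpace

section EvenHom

open CliffordAlgebra

variable {K M A : Type*} [CommRing K] [AddCommGroup M] [Module K M] [Ring A] [Algebra K A]
  {Q : QuadraticForm K M} (f : EvenHom Q A) {u v w : M}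

theorem evenHom_bilin_swap (huv : Q.IsOrtho u v) : f.bilin u v = -f.bilin v u := by
  have hsum : f.bilin u u + f.bilin u v + (f.bilin v u + f.bilin v v) =
      f.bilin u u + f.bilin v v := by
    calc
      _ = f.bilin (u + v) (u + v) := by simp only [map_add, LinearMap.add_apply]; abel
      _ = f.bilin u u + f.bilin v v := by
        rw [f.contract, f.contract, f.contract, QuadraticMap.isOrtho_def.mp huv, map_add]
  rw [eq_neg_iff_add_eq_zero, ← sub_eq_zero.mpr hsum]
  abel

theorem evenHom_bilin_mul_bilin (huv : Q.IsOrtho u v) (hwu : Q.IsOrtho w u)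
    (hwv : Q.IsOrtho w v) : f.bilin u v * f.bilin w u = -(Q u • f.bilin w v) := by
  rw [evenHom_bilin_swap f huv, evenHom_bilin_swap f hwu, neg_mul_neg, f.contract_mid,
    evenHom_bilin_swap f hwv, smul_neg, neg_neg]

theorem evenHom_bilin_mul_self (huv : Q.IsOrtho u v) :
    f.bilin u v * f.bilin u v = -algebraMap K A (Q u * Q v) := by
  calc
    f.bilin u v * f.bilin u v = -(f.bilin u v * f.bilin v u) := by
      rw [← mul_neg, ← evenHom_bilin_swap f huv]
    _ = -algebraMap K A (Q u * Q v) := by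
      rw [f.contract_mid, f.contract, mul_comm, map_mul, Algebra.smul_def]

end EvenHom

theorem antilinear_part_eq_zero_of_map_eq_mul {V A : Type*} [Ring A] {S : A} (hS : S * S = -1)
    {σ : V → V} {F : V → V → A} (hF : ∀ X Y, F (σ X) Y = S * F X Y) (X Y : V) :
    F (σ X) (σ Y) - S * F (σ X) Y - S * F X (σ Y) - F X Y = 0 := by
  rw [hF, hF, ← mul_assoc, hS, neg_one_mul]
  abel

section CurvatureTerm

variable {K V : Type*} [CommRing K] [AddCommGroup V] [Module K V] (B : LinearMap.BilinForm K V)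

/-- The summand of the curvature identity contributed by an index `s`, for `A = J s i` and
`C = J s j`, with an arbitrary bilinear form `B` in place of the inner product. -/
def curvatureTerm (A C : Module.End K V) (X Y : V) : Module.End K V :=
  B (A X) Y • C - B (C X) Y • A

theorem curvatureTerm_map_eq_mul {S A : Module.End K V} (hS : S * S = -1)
    (hAS : A * S = -(S * A)) (X Y : V) :
    curvatureTerm B A (S * A) (S X) Y = S * curvatureTerm B A (S * A) X Y := by
  have hSSA : S * (S * A) = -A := by rw [← mul_assoc, hS, neg_one_mul]
  have hSAS : S * A * S = A := by rw [mul_assoc, hAS, mul_neg, hSSA, neg_neg]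
  have hASX : A (S X) = -(S * A) X := LinearMap.congr_fun hAS X
  have hSASX : (S * A) (S X) = A X := LinearMap.congr_fun hSAS X
  rw [curvatureTerm, curvatureTerm, hASX, hSASX, mul_sub, mul_smul_comm, mul_smul_comm, hSSA,
    map_neg, LinearMap.neg_apply]
  module

end CurvatureTerm

theorem isOrtho_of_inner_eq_zero {E : Type*} [NormedAddCommGroup E] [InnerProductSpace ℝ E]
    {Q : QuadraticForm ℝ E} (hQ : ∀ v, Q v = -‖v‖ ^ 2) {u v : E} (huv : ⟪u, v⟫ = 0) :
    Q.IsOrtho u v := by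
  rw [QuadraticMap.isOrtho_def, hQ, hQ, hQ, norm_add_sq_real, huv]
  ring

theorem stmt4_general {K M V ι : Type*} [CommRing K] [AddCommGroup M] [Module K M]
    [AddCommGroup V] [Module K V] {Q : QuadraticForm K M}
    (φ : CliffordAlgebra.even Q →ₐ[K] Module.End K V) {e : ι → M}
    (he : Pairwise fun i j => Q.IsOrtho (e i) (e j)) {J : ι → ι → Module.End K V}
    (hJ : ∀ i j, J i j = φ ((CliffordAlgebra.even.ι Q).bilin (e i) (e j)))
    {i j : ι} (hij : i ≠ j) (hi : Q (e i) = -1) (hj : Q (e j) = -1)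
    {T : Finset ι} (hiT : i ∉ T) (hjT : j ∉ T)
    (B : LinearMap.BilinForm K V) {κ : K} {R : V → V → Module.End K V}
    (hR : ∀ X Y, ⁅R X Y, J i j⁆ =
      κ • ∑ s ∈ T, (B (J s i X) Y • J s j - B (J s j X) Y • J s i))
    (X Y : V) :
    ⁅R (J i j X) (J i j Y), J i j⁆ - J i j * ⁅R (J i j X) Y, J i j⁆
      - J i j * ⁅R X (J i j Y), J i j⁆ - ⁅R X Y, J i j⁆ = 0 := by
  let f := (CliffordAlgebra.even.ι Q).compr₂ φ
  replace hJ : ∀ i j, J i j = f.bilin (e i) (e j) := hJ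
  replace hR : ∀ X Y, ⁅R X Y, J i j⁆ =
      κ • ∑ s ∈ T, curvatureTerm B (J s i) (J s j) X Y := hR
  have hS : J i j * J i j = -1 := by
    rw [hJ, evenHom_bilin_mul_self f (he hij), hi, hj]
    simp
  have hterm : ∀ s ∈ T, ∀ X Y, curvatureTerm B (J s i) (J s j) (J i j X) Y =
      J i j * curvatureTerm B (J s i) (J s j) X Y := by
    intro s hs X Y
    have hsi : s ≠ i := ne_of_mem_of_not_mem hs hiT
    have hsj : s ≠ j := ne_of_mem_of_not_mem hs hjT
    have hSA : J s j = J i j * J s i := by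
      rw [hJ, hJ, hJ, evenHom_bilin_mul_bilin f (he hij) (he hsi) (he hsj), hi, neg_one_smul,
        neg_neg]
    have hAS : J s i * J i j = -(J i j * J s i) := by
      rw [← hSA, hJ, hJ, hJ, f.contract_mid, hi, neg_one_smul]
    rw [hSA, curvatureTerm_map_eq_mul B hS hAS]
  have hlinear : ∀ X Y, ⁅R (J i j X) Y, J i j⁆ = J i j * ⁅R X Y, J i j⁆ := by
    intro X Y
    rw [hR, hR, mul_smul_comm, Finset.mul_sum,
      Finset.sum_congr rfl fun s hs => hterm s hs X Y]
  exact antilinear_part_eq_zero_of_map_eq_mul (F := fun X Y => ⁅R X Y, J i j⁆) hS hlinear X Y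

theorem stmt4
    (V : Type*) [NormedAddCommGroup V] [InnerProductSpace ℝ V] [FiniteDimensional ℝ V]
    (r : ℕ) (hr : 3 ≤ r)
    (Q : QuadraticForm ℝ (EuclideanSpace ℝ (Fin r)))
    (hQ : ∀ v : EuclideanSpace ℝ (Fin r), Q v = -‖v‖ ^ 2)
    (φ : CliffordAlgebra.even Q →ₐ[ℝ] Module.End ℝ V)
    (e : Fin r → EuclideanSpace ℝ (Fin r))
    (he : ∀ i, e i = EuclideanSpace.single i (1 : ℝ))
    (J : Fin r → Fin r → Module.End ℝ V)
    (hJ : ∀ i j, J i j = φ ((CliffordAlgebra.even.ι Q).bilin (e i) (e j)))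
    (hskew : ∀ i j, i ≠ j → ∀ x y : V, ⟪J i j x, y⟫ = -⟪x, J i j y⟫)
    (κ : ℝ) (R : V →ₗ[ℝ] V →ₗ[ℝ] Module.End ℝ V)
    (hR : ∀ X Y : V,
      ⁅R X Y, J ⟨0, by omega⟩ ⟨1, by omega⟩⁆ =
        κ • ∑ s ∈ Finset.univ.filter (fun s : Fin r => 2 ≤ (s : ℕ)),
          (⟪J s ⟨0, by omega⟩ X, Y⟫ • J s ⟨1, by omega⟩
            - ⟪J s ⟨1, by omega⟩ X, Y⟫ • J s ⟨0, by omega⟩)) :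
    ∀ X Y : V,
      (fun S : Module.End ℝ V =>
        ⁅R (S X) (S Y), S⁆ - S * ⁅R (S X) Y, S⁆ - S * ⁅R X (S Y), S⁆ - ⁅R X Y, S⁆)
        (J ⟨0, by omega⟩ ⟨1, by omega⟩) = 0 := by
  have hortho : Pairwise fun i j => Q.IsOrtho (e i) (e j) := fun i j hij =>
    isOrtho_of_inner_eq_zero hQ (by simpa only [he] using EuclideanSpace.orthonormal_single.2 hij)
  have hneg : ∀ i, Q (e i) = -1 := by simp [hQ, he]
  exact stmt4_general φ hortho hJ (by simp) (hneg _) (hneg _) (by simp) (by simp) (innerₗ V)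
    (R := fun X Y => R X Y) hR
end
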